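/- arXiv:2302.14658 — 3 statements merged into one kernel-verified Lean document; each statement's English description precedes it below -/
import Mathlib

section
/- Define G(x) = −∫_{−∞}^{x} sin²(πu)/(π²·u·(u+1)²) du for x ∈ ℝ, where the integrand extends continuously across u = 0 and u = −1. Then G(x) ≥ x_+^0 for all x ∈ ℝ, where x_+^0 is the Heaviside function, and ∫_{−∞}^{∞} (G(x) − x_+^0) dx = 1. -/
open MeasureTheory Real Set

/-- The (upper semi-continuous) Heaviside function `x₊⁰`. -/
noncomputable def heaviside (x : ℝ) : ℝ := if 0 ≤ x then 1 else 0

/-!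
Write `S u = (sin (π u) / (π u)) ^ 2`. The integrand `h` satisfies `u * h u = S (u + 1)` and
`h u = u * S u - (u + 1) * S (u + 1) - S (u + 1)`. The first two terms of the latter telescope,
and `∫ S = 1` by Parseval on `[-1/2, 1/2]`, so `∫ h = -1`. Hence, writing `H` for the Heaviside
function, `G x - H x = ∫ (H x - H (x - u)) * h u du`. The factor `H x - H (x - u)` has the sign of
`u`, as does `h u`, so the integrand is nonnegative; and `∫ (H x - H (x - u)) dx = u`, so Fubini
gives `∫ (G - H) = ∫ u * h u du = ∫ S = 1`.
-/

open Filter Topology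

section HeavisideTranslate

lemma monotone_heaviside : Monotone heaviside := fun x y hxy ↦ by
  simp only [heaviside]
  grind

lemma measurable_heaviside : Measurable heaviside :=
  monotone_heaviside.measurable

lemma heaviside_sub_translate (x u : ℝ) :
    heaviside x - heaviside (x - u) =
      (Ico 0 u).indicator (fun _ ↦ 1) x - (Ico u 0).indicator (fun _ ↦ 1) x := by
  simp only [heaviside, indicator, mem_Ico]
  grind

lemma abs_heaviside_sub_translate (x u : ℝ) :
    |heaviside x - heaviside (x - u)| =
      (Ico 0 u).indicator (fun _ ↦ 1) x + (Ico u 0).indicator (fun _ ↦ 1) x := by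
  simp only [heaviside, indicator, mem_Ico]
  grind

lemma integrable_indicator_Ico_one (a b : ℝ) :
    Integrable ((Ico a b).indicator (fun _ ↦ (1 : ℝ))) :=
  (integrable_indicator_iff measurableSet_Ico).2 (by simp)

lemma integral_indicator_Ico_one (a b : ℝ) :
    ∫ x, (Ico a b).indicator (fun _ ↦ (1 : ℝ)) x = max (b - a) 0 := by
  simp [integral_indicator measurableSet_Ico]

lemma integrable_heaviside_sub_translate (u : ℝ) :
    Integrable fun x ↦ heaviside x - heaviside (x - u) := by
  simp only [heaviside_sub_translate]
  exact (integrable_indicator_Ico_one 0 u).sub (integrable_indicator_Ico_one u 0)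

lemma integral_heaviside_sub_translate (u : ℝ) :
    ∫ x, (heaviside x - heaviside (x - u)) = u := by
  simp only [heaviside_sub_translate]
  rw [integral_sub (integrable_indicator_Ico_one 0 u) (integrable_indicator_Ico_one u 0),
    integral_indicator_Ico_one, integral_indicator_Ico_one]
  grind

lemma integral_abs_heaviside_sub_translate (u : ℝ) :
    ∫ x, |heaviside x - heaviside (x - u)| = |u| := by
  simp only [abs_heaviside_sub_translate]
  rw [integral_add (integrable_indicator_Ico_one 0 u) (integrable_indicator_Ico_one u 0),
    integral_indicator_Ico_one, integral_indicator_Ico_one]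
  grind

lemma heaviside_sub_translate_mul_nonneg (x : ℝ) {u y : ℝ} (huy : 0 ≤ u * y) :
    0 ≤ (heaviside x - heaviside (x - u)) * y := by
  rcases lt_trichotomy u 0 with hu | rfl | hu
  · exact mul_nonneg_of_nonpos_of_nonpos
      (sub_nonpos.2 (monotone_heaviside (by linarith))) (nonpos_of_mul_nonneg_right huy hu)
  · simp
  · exact mul_nonneg
      (sub_nonneg.2 (monotone_heaviside (by linarith))) (nonneg_of_mul_nonneg_right huy hu)

end HeavisideTranslate

section FirstMoment

variable {E : Type*} [NormedAddCommGroup E] [NormedSpace ℝ E] {f : ℝ → E}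

lemma integral_heaviside_sub_translate_smul (hf : Integrable f) (x : ℝ) :
    ∫ u, (heaviside x - heaviside (x - u)) • f u =
      heaviside x • (∫ u, f u) - ∫ u in Iic x, f u := by
  have translate_smul :
      (fun u ↦ heaviside (x - u) • f u) = (Iic x).indicator f := by
    ext u
    by_cases hu : u ≤ x <;> simp [heaviside, hu]
  have integrable_translate_smul : Integrable fun u ↦ heaviside (x - u) • f u :=
    translate_smul ▸ hf.indicator measurableSet_Iic
  simp only [sub_smul]
  rw [integral_sub (f := fun u ↦ heaviside x • f u) (hf.smul _) integrable_translate_smul,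
    translate_smul, integral_indicator measurableSet_Iic, integral_smul]

lemma setIntegral_Iic_le_heaviside_mul_integral {f : ℝ → ℝ} (hf : Integrable f)
    (hsign : ∀ u, 0 ≤ u * f u) (x : ℝ) :
    ∫ u in Iic x, f u ≤ heaviside x * ∫ u, f u := by
  rw [← sub_nonneg, ← smul_eq_mul, ← integral_heaviside_sub_translate_smul hf]
  exact integral_nonneg fun u ↦ heaviside_sub_translate_mul_nonneg x (hsign u)

lemma integrable_heaviside_sub_translate_smul (hf : AEStronglyMeasurable f)
    (hmoment : Integrable fun u ↦ u • f u) :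
    Integrable (Function.uncurry fun x u ↦ (heaviside x - heaviside (x - u)) • f u)
      (volume.prod volume) := by
  have hmeas : AEStronglyMeasurable
      (Function.uncurry fun x u ↦ (heaviside x - heaviside (x - u)) • f u)
      (volume.prod volume) :=
    ((measurable_heaviside.comp measurable_fst).sub
      (measurable_heaviside.comp (measurable_fst.sub measurable_snd))).aestronglyMeasurable.smul
      hf.comp_snd
  refine (integrable_prod_iff' hmeas).2
    ⟨.of_forall fun u ↦ (integrable_heaviside_sub_translate u).smul_const (f u), ?_⟩
  simpa only [Function.uncurry_apply_pair, norm_smul, Real.norm_eq_abs, integral_mul_const,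
    integral_abs_heaviside_sub_translate] using hmoment.norm

theorem integral_heaviside_smul_integral_sub_setIntegral_Iic [CompleteSpace E] (hf : Integrable f)
    (hmoment : Integrable fun u ↦ u • f u) :
    ∫ x, (heaviside x • (∫ u, f u) - ∫ u in Iic x, f u) = ∫ u, u • f u := by
  simp only [← integral_heaviside_sub_translate_smul hf]
  rw [integral_integral_swap
    (integrable_heaviside_sub_translate_smul hf.aestronglyMeasurable hmoment)]
  simp only [integral_smul_const, integral_heaviside_sub_translate]

lemma integrable_of_integrable_id_smul (hf : LocallyIntegrable f)
    (hmoment : Integrable fun u ↦ u • f u) : Integrable f := by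
  have near : IntegrableOn f (Icc (-1) 1) := hf.integrableOn_isCompact isCompact_Icc
  have far : IntegrableOn f (Icc (-1) 1)ᶜ := by
    refine Integrable.mono hmoment.integrableOn hf.aestronglyMeasurable.restrict ?_
    filter_upwards [ae_restrict_mem measurableSet_Icc.compl] with u hu
    have one_le_abs : 1 ≤ |u| := by
      by_contra! h
      exact hu (abs_le.mp h.le)
    rw [norm_smul]
    exact le_mul_of_one_le_left (norm_nonneg _) one_le_abs
  rw [← integrableOn_univ, ← union_compl_self (Icc (-1 : ℝ) 1)]
  exact near.union far

end FirstMoment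

section IntegralSubTranslate

variable {E : Type*} [NormedAddCommGroup E] [NormedSpace ℝ E] [CompleteSpace E] {f : ℝ → E}

lemma tendsto_intervalIntegral_add_const {l : Filter ℝ} [TendstoIxxClass Icc l l] {b : E} {c : ℝ}
    (hf : LocallyIntegrable f) (hlim : Tendsto f l (𝓝 b)) (hl : Tendsto (· + c) l l) :
    Tendsto (fun x ↦ ∫ t in x..x + c, f t) l (𝓝 (c • b)) := by
  rw [Metric.tendsto_nhds]
  intro ε hε
  have hδ : 0 < ε / (|c| + 1) := by positivity
  have close_on_segment :
      ∀ᶠ x in l, uIcc x (x + c) ⊆ {t | dist (f t) b < ε / (|c| + 1)} :=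
    tendsto_smallSets_iff.1 (tendsto_id.uIcc hl) _ (Metric.tendsto_nhds.1 hlim _ hδ)
  filter_upwards [close_on_segment] with x hx
  have hint : IntervalIntegrable f volume x (x + c) :=
    (hf.integrableOn_isCompact isCompact_uIcc).intervalIntegrable
  calc dist (∫ t in x..x + c, f t) (c • b)
      = ‖∫ t in x..x + c, (f t - b)‖ := by
        rw [intervalIntegral.integral_sub hint intervalIntegrable_const,
          intervalIntegral.integral_const, add_sub_cancel_left, dist_eq_norm]
    _ ≤ ε / (|c| + 1) * |x + c - x| :=
        intervalIntegral.norm_integral_le_of_norm_le_const fun t ht ↦ by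
          rw [← dist_eq_norm]
          exact (hx (uIoc_subset_uIcc ht)).le
    _ < ε := by
        rw [add_sub_cancel_left, div_mul_eq_mul_div, div_lt_iff₀ (by positivity)]
        nlinarith

theorem integral_translate_sub {a b : E} {c : ℝ} (hf : LocallyIntegrable f)
    (hbot : Tendsto f atBot (𝓝 a)) (htop : Tendsto f atTop (𝓝 b))
    (hint : Integrable fun x ↦ f (x + c) - f x) :
    ∫ x, (f (x + c) - f x) = c • (b - a) := by
  have hf_int (x y : ℝ) : IntervalIntegrable f volume x y :=
    (hf.integrableOn_isCompact isCompact_uIcc).intervalIntegrable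
  have telescope (R : ℝ) : ∫ x in -R..R, (f (x + c) - f x) =
      (∫ x in R..R + c, f x) - ∫ x in -R..-R + c, f x := by
    rw [intervalIntegral.integral_sub
        (by simpa using (hf_int (-R + c) (R + c)).comp_add_right c) (hf_int _ _),
      intervalIntegral.integral_comp_add_right,
      intervalIntegral.integral_interval_sub_interval_comm' (hf_int _ _) (hf_int _ _) (hf_int _ _)]
  rw [smul_sub]
  refine tendsto_nhds_unique
    (intervalIntegral_tendsto_integral hint tendsto_neg_atTop_atBot tendsto_id) ?_
  simp only [id, telescope]
  have at_top := tendsto_intervalIntegral_add_const hf htop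
    (tendsto_atTop_add_const_right _ c tendsto_id)
  have at_bot := tendsto_intervalIntegral_add_const hf hbot
    (tendsto_atBot_add_const_right _ c tendsto_id)
  exact at_top.sub (at_bot.comp tendsto_neg_atTop_atBot)

end IntegralSubTranslate

section Periodization

open scoped ENNReal

lemma lintegral_eq_setLIntegral_Ioc_tsum_add_intCast {f : ℝ → ℝ≥0∞} (hf : AEMeasurable f)
    (a : ℝ) :
    ∫⁻ x, f x = ∫⁻ x in Ioc a (a + 1), ∑' n : ℤ, f (x + n) := by
  have translate_Ioc (n : ℤ) :
      ∫⁻ x in Ioc (a + n) (a + n + 1), f x = ∫⁻ x in Ioc a (a + 1), f (x + n) := by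
    rw [← (measurePreserving_add_right volume (n : ℝ)).setLIntegral_comp_preimage_emb
        (measurableEmbedding_addRight _), preimage_add_const_Ioc]
    ring_nf
  have hf_translate (n : ℤ) : AEMeasurable (fun x ↦ f (x + n)) (volume.restrict (Ioc a (a + 1))) :=
    (hf.comp_quasiMeasurePreserving
      (measurePreserving_add_right volume (n : ℝ)).quasiMeasurePreserving).restrict
  rw [← setLIntegral_univ, ← iUnion_Ioc_add_intCast a,
    lintegral_iUnion (fun _ ↦ measurableSet_Ioc) (pairwise_disjoint_Ioc_add_intCast a),
    lintegral_tsum hf_translate]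
  exact tsum_congr translate_Ioc

variable {f : ℝ → ℝ} {c : ℝ}

lemma lintegral_ofReal_of_hasSum_add_intCast (hf : AEStronglyMeasurable f) (hnonneg : ∀ x, 0 ≤ f x)
    (hsum : ∀ x, HasSum (fun n : ℤ ↦ f (x + n)) c) :
    ∫⁻ x, ENNReal.ofReal (f x) = ENNReal.ofReal c := by
  have tsum_translates (x : ℝ) : ∑' n : ℤ, ENNReal.ofReal (f (x + n)) = ENNReal.ofReal c := by
    rw [← ENNReal.ofReal_tsum_of_nonneg (fun _ ↦ hnonneg _) (hsum x).summable, (hsum x).tsum_eq]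
  rw [lintegral_eq_setLIntegral_Ioc_tsum_add_intCast hf.aemeasurable.ennreal_ofReal 0]
  simp [tsum_translates]

lemma integrable_of_hasSum_add_intCast (hf : AEStronglyMeasurable f) (hnonneg : ∀ x, 0 ≤ f x)
    (hsum : ∀ x, HasSum (fun n : ℤ ↦ f (x + n)) c) : Integrable f := by
  refine ⟨hf, ?_⟩
  rw [hasFiniteIntegral_iff_ofReal (.of_forall hnonneg),
    lintegral_ofReal_of_hasSum_add_intCast hf hnonneg hsum]
  exact ENNReal.ofReal_lt_top

lemma integral_of_hasSum_add_intCast (hf : AEStronglyMeasurable f) (hnonneg : ∀ x, 0 ≤ f x)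
    (hsum : ∀ x, HasSum (fun n : ℤ ↦ f (x + n)) c) : ∫ x, f x = c := by
  rw [integral_eq_lintegral_of_nonneg_ae (.of_forall hnonneg) hf,
    lintegral_ofReal_of_hasSum_add_intCast hf hnonneg hsum,
    ENNReal.toReal_ofReal ((hsum 0).nonneg fun _ ↦ hnonneg _)]

end Periodization

section SincSq

/-- The Fejér kernel `u ↦ (sin (π u) / (π u)) ^ 2` on the line, with value `1` at `u = 0`. It is the
building block of `majorantKernel`. -/
noncomputable def sincSq (u : ℝ) : ℝ := sinc (π * u) ^ 2

@[fun_prop]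
lemma continuous_sincSq : Continuous sincSq := by
  unfold sincSq
  fun_prop

lemma sincSq_nonneg (u : ℝ) : 0 ≤ sincSq u := sq_nonneg _

lemma sq_mul_sincSq (u : ℝ) : u ^ 2 * sincSq u = sin (π * u) ^ 2 / π ^ 2 := by
  rcases eq_or_ne u 0 with rfl | hu
  · simp
  · rw [sincSq, sinc_of_ne_zero (mul_ne_zero pi_ne_zero hu)]
    field_simp

lemma sq_mul_sincSq_add_one (u : ℝ) : (u + 1) ^ 2 * sincSq (u + 1) = u ^ 2 * sincSq u := by
  rw [sq_mul_sincSq, sq_mul_sincSq, mul_add, mul_one, sin_add_pi, neg_sq]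

lemma intervalIntegral_exp_mul_I_eq_sinc (w : ℝ) :
    ∫ x in (-(1 / 2) : ℝ)..1 / 2, Complex.exp ((2 * w * x : ℝ) * Complex.I) = sinc w := by
  rcases eq_or_ne w 0 with rfl | hw
  · norm_num
  have hw' : (w : ℂ) ≠ 0 := by exact_mod_cast hw
  rw [intervalIntegral.integral_comp_mul_left
      (fun t : ℝ ↦ Complex.exp (t * Complex.I)) (mul_ne_zero two_ne_zero hw),
    show 2 * w * -(1 / 2) = -w by ring, show 2 * w * (1 / 2) = w by ring,
    integral_exp_mul_I_eq_sinc, Complex.real_smul]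
  push_cast
  field_simp

lemma fourierCoeffOn_exp_mul_I (u : ℝ) (n : ℤ) :
    fourierCoeffOn (a := -(1 / 2)) (b := 1 / 2) (by norm_num)
      (fun x : ℝ ↦ Complex.exp ((2 * (π * u) * x : ℝ) * Complex.I)) n = sinc (π * (u - n)) := by
  have mul_character (x : ℝ) :
      fourier (-n) (x : AddCircle ((1 / 2 : ℝ) - -(1 / 2))) •
        Complex.exp ((2 * (π * u) * x : ℝ) * Complex.I) =
      Complex.exp ((2 * (π * (u - n)) * x : ℝ) * Complex.I) := by
    rw [fourier_coe_apply, smul_eq_mul, ← Complex.exp_add]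
    push_cast
    ring_nf
  rw [fourierCoeffOn_eq_integral]
  simp only [mul_character, intervalIntegral_exp_mul_I_eq_sinc]
  norm_num

lemma hasSum_sincSq_add_intCast (u : ℝ) : HasSum (fun n : ℤ ↦ sincSq (u + n)) 1 := by
  have memLp_exp : MemLp (fun x : ℝ ↦ Complex.exp ((2 * (π * u) * x : ℝ) * Complex.I)) 2
      (volume.restrict (Ioc (-(1 / 2)) (1 / 2))) :=
    MemLp.of_bound (by fun_prop) 1
      (.of_forall fun x ↦ (Complex.norm_exp_ofReal_mul_I _).le)
  have parseval := hasSum_sq_fourierCoeffOn (by norm_num) memLp_exp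
  simp only [fourierCoeffOn_exp_mul_I, Complex.norm_exp_ofReal_mul_I, Complex.norm_real,
    Real.norm_eq_abs, sq_abs] at parseval
  rw [← (Equiv.neg ℤ).hasSum_iff] at parseval
  convert parseval using 1
  · ext n
    simp [sincSq]
  · norm_num

lemma integrable_sincSq : Integrable sincSq :=
  integrable_of_hasSum_add_intCast continuous_sincSq.aestronglyMeasurable sincSq_nonneg
    hasSum_sincSq_add_intCast

lemma integral_sincSq : ∫ u, sincSq u = 1 :=
  integral_of_hasSum_add_intCast continuous_sincSq.aestronglyMeasurable sincSq_nonneg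
    hasSum_sincSq_add_intCast

lemma tendsto_mul_sincSq {l : Filter ℝ} (hl : Tendsto (·⁻¹) l (𝓝 (0 : ℝ))) :
    Tendsto (fun u ↦ u * sincSq u) l (𝓝 0) := by
  have mul_sincSq (u : ℝ) : u * sincSq u = sin (π * u) ^ 2 / π ^ 2 * u⁻¹ := by
    rw [← sq_mul_sincSq]
    rcases eq_or_ne u 0 with rfl | hu
    · simp
    · field_simp
  simp only [mul_sincSq]
  refine bdd_le_mul_tendsto_zero (b := 0) (B := 1 / π ^ 2) ?_ ?_ hl
  · exact .of_forall fun u ↦ by positivity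
  · exact .of_forall fun u ↦ by gcongr; exact sin_sq_le_one _

end SincSq

section MajorantKernel

/-- The continuous extension of `u ↦ sin²(πu) / (π² u (u + 1)²)` to the line, minus whose primitive
majorizes the Heaviside function. It is written in terms of `sincSq` by the partial fractions
`1 / (u (u + 1)²) = 1 / u - 1 / (u + 1) - 1 / (u + 1)²`. -/
noncomputable def majorantKernel (u : ℝ) : ℝ :=
  u * sincSq u - (u + 1) * sincSq (u + 1) - sincSq (u + 1)

lemma continuous_majorantKernel : Continuous majorantKernel := by
  unfold majorantKernel
  fun_prop

lemma mul_majorantKernel (u : ℝ) : u * majorantKernel u = sincSq (u + 1) := by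
  unfold majorantKernel
  linear_combination -sq_mul_sincSq_add_one u

lemma mul_majorantKernel_nonneg (u : ℝ) : 0 ≤ u * majorantKernel u :=
  (sincSq_nonneg (u + 1)).trans_eq (mul_majorantKernel u).symm

lemma majorantKernel_eq_div {u : ℝ} (h0 : u ≠ 0) (h1 : u ≠ -1) :
    majorantKernel u = sin (π * u) ^ 2 / (π ^ 2 * u * (u + 1) ^ 2) := by
  have hu : u + 1 ≠ 0 := by rwa [Ne, add_eq_zero_iff_eq_neg]
  have clear_denominator : u * (u + 1) ^ 2 * majorantKernel u = sin (π * u) ^ 2 / π ^ 2 := by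
    rw [← sq_mul_sincSq, ← sq_mul_sincSq_add_one, ← mul_majorantKernel]
    ring
  rw [eq_div_iff (by positivity)] at clear_denominator ⊢
  linear_combination clear_denominator

lemma eq_majorantKernel_of_continuous {h : ℝ → ℝ} (hc : Continuous h)
    (heq : ∀ u : ℝ, u ≠ 0 → u ≠ -1 → h u = sin (π * u) ^ 2 / (π ^ 2 * u * (u + 1) ^ 2)) :
    h = majorantKernel := by
  have dense_compl : Dense ({0, -1}ᶜ : Set ℝ) := (toFinite {0, -1}).countable.dense_compl ℝ
  refine Continuous.ext_on dense_compl hc continuous_majorantKernel fun u hu ↦ ?_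
  simp only [mem_compl_iff, mem_insert_iff, mem_singleton_iff, not_or] at hu
  rw [heq u hu.1 hu.2, majorantKernel_eq_div hu.1 hu.2]

lemma integrable_mul_majorantKernel : Integrable fun u ↦ u * majorantKernel u := by
  simpa only [mul_majorantKernel] using integrable_sincSq.comp_add_right 1

lemma integral_mul_majorantKernel : ∫ u, u * majorantKernel u = 1 := by
  simp only [mul_majorantKernel]
  rw [integral_add_right_eq_self, integral_sincSq]

lemma integrable_majorantKernel : Integrable majorantKernel :=
  integrable_of_integrable_id_smul continuous_majorantKernel.locallyIntegrable
    integrable_mul_majorantKernel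

lemma integral_majorantKernel : ∫ u, majorantKernel u = -1 := by
  have integrable_translate : Integrable fun u ↦ sincSq (u + 1) :=
    integrable_sincSq.comp_add_right 1
  have split (u : ℝ) : majorantKernel u =
      -((u + 1) * sincSq (u + 1) - u * sincSq u) - sincSq (u + 1) := by
    unfold majorantKernel
    ring
  have integrable_diff : Integrable fun u ↦ (u + 1) * sincSq (u + 1) - u * sincSq u := by
    refine (integrable_majorantKernel.add integrable_translate).neg.congr (.of_forall fun u ↦ ?_)
    simp only [Pi.neg_apply, Pi.add_apply, split]
    ring
  have integral_diff : ∫ u, ((u + 1) * sincSq (u + 1) - u * sincSq u) = 0 := by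
    simpa using integral_translate_sub (continuous_id.mul continuous_sincSq).locallyIntegrable
      (tendsto_mul_sincSq tendsto_inv_atBot_zero) (tendsto_mul_sincSq tendsto_inv_atTop_zero)
      integrable_diff
  simp only [split]
  rw [integral_sub (f := fun u ↦ -((u + 1) * sincSq (u + 1) - u * sincSq u))
      integrable_diff.neg integrable_translate, integral_neg, integral_diff,
    integral_add_right_eq_self, integral_sincSq]
  norm_num

end MajorantKernel

theorem stmt_6
    -- `h` is the continuous extension of `u ↦ sin²(πu)/(π²·u·(u+1)²)`
    (h : ℝ → ℝ) (hc : Continuous h)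
    (heq : ∀ u : ℝ, u ≠ 0 → u ≠ -1 →
      h u = Real.sin (π * u) ^ 2 / (π ^ 2 * u * (u + 1) ^ 2))
    (G : ℝ → ℝ) (hG : ∀ x : ℝ, G x = -∫ u in Iic x, h u) :
    (∀ x : ℝ, heaviside x ≤ G x) ∧ (∫ x : ℝ, (G x - heaviside x)) = 1 := by
  obtain rfl : h = majorantKernel := eq_majorantKernel_of_continuous hc heq
  have sub_eq (x : ℝ) : G x - heaviside x =
      heaviside x • (∫ u, majorantKernel u) - ∫ u in Iic x, majorantKernel u := by
    rw [hG, integral_majorantKernel, smul_eq_mul]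
    ring
  constructor
  · intro x
    rw [← sub_nonneg, sub_eq, smul_eq_mul, sub_nonneg]
    exact setIntegral_Iic_le_heaviside_mul_integral integrable_majorantKernel
      mul_majorantKernel_nonneg x
  · simp only [sub_eq]
    rw [integral_heaviside_smul_integral_sub_setIntegral_Iic integrable_majorantKernel
      integrable_mul_majorantKernel]
    exact integral_mul_majorantKernel
end

section
/- The function g(x) = −sin²(πx)/(π²·x·(x+1)²) (extended continuously across x = 0 and x = −1) satisfies ∫_{−∞}^{∞} g(x) dx = 1; equivalently, ∫_{−∞}^{∞} sin²(πu)/(π²·u·(u+1)²) du = −1. -/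
open MeasureTheory Real Set

/-!
Since `1 / (x (x + 1)²) = 1 / (x (x + 1)) - 1 / (x + 1)²` and `sin (π (x + 1)) = -sin (π x)`, the
function `g` equals `sinc (πx + π)² + sinc (πx) sinc (πx + π)`. The translates of `sinc` satisfy
`∫ sinc (πx + a) sinc (πx + b) dx = sinc (a - b)`, so the two summands contribute `sinc 0 = 1` and
`sinc (-π) = 0`.

To get this integral, cut `ℝ` into unit intervals. The numbers `sinc (x + nπ)` are the Fourier
coefficients of `t ↦ exp (ixt)` on `[-1, 1]`, so by Parseval's identity the integer translates of
the integrand sum to the constant `sinc (a - b)`.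
-/

section Fourier

open AddCircle
open scoped ComplexConjugate

lemma hasSum_conj_fourierCoeff_mul_fourierCoeff {T : ℝ} [Fact (0 < T)]
    (f g : Lp ℂ 2 (haarAddCircle (T := T))) :
    HasSum (fun n => conj (fourierCoeff f n) * fourierCoeff g n)
      (∫ t, conj (f t) * g t ∂haarAddCircle) := by
  have hinner := fourierBasis.hasSum_inner_mul_inner f g
  rw [L2.inner_def] at hinner
  simp only [RCLike.inner_apply'] at hinner
  refine hinner.congr_fun fun n => ?_
  simp only [← fourierBasis_repr, HilbertBasis.repr_apply_apply, inner_conj_symm]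

lemma hasSum_conj_fourierCoeffOn_mul_fourierCoeffOn {a b : ℝ} {f g : ℝ → ℂ} (hab : a < b)
    (hf : MemLp f 2 (volume.restrict (Ioc a b))) (hg : MemLp g 2 (volume.restrict (Ioc a b))) :
    HasSum (fun n => conj (fourierCoeffOn hab f n) * fourierCoeffOn hab g n)
      ((b - a)⁻¹ • ∫ t in a..b, conj (f t) * g t) := by
  have : Fact (0 < b - a) := ⟨sub_pos.2 hab⟩
  rw [← add_sub_cancel a b] at hf hg
  have hf_circle := hf.memLp_liftIoc.haarAddCircle
  have hg_circle := hg.memLp_liftIoc.haarAddCircle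
  convert hasSum_conj_fourierCoeff_mul_fourierCoeff hf_circle.toLp hg_circle.toLp
  · simp [fourierCoeff_congr_ae hf_circle.coeFn_toLp, fourierCoeff_liftIoc_eq]
  · simp [fourierCoeff_congr_ae hg_circle.coeFn_toLp, fourierCoeff_liftIoc_eq]
  · nth_rw 2 [← add_sub_cancel a b]
    rw [← AddCircle.integral_liftIoc_eq_intervalIntegral, ← AddCircle.integral_haarAddCircle]
    apply integral_congr_ae
    filter_upwards [hf_circle.coeFn_toLp, hg_circle.coeFn_toLp] with x hfx hgx
    rw [hfx, hgx]
    rfl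

lemma integral_eq_integral_tsum_comp_add_int {E : Type*} [NormedAddCommGroup E] [NormedSpace ℝ E]
    {f : ℝ → E} (hf : Integrable f) : ∫ x, f x = ∫ x in (0 : ℝ)..1, ∑' n : ℤ, f (x + n) := by
  have hsum := hf.hasSum_intervalIntegral_comp_add_int
  have hsum_norm := hf.norm.hasSum_intervalIntegral_comp_add_int
  simp only [intervalIntegral.integral_of_le zero_le_one] at hsum hsum_norm ⊢
  rw [← hsum.tsum_eq]
  exact integral_tsum_of_summable_integral_norm
    (fun n => (hf.comp_add_right (n : ℝ)).restrict) hsum_norm.summable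

end Fourier

section Sinc

open scoped ComplexConjugate

lemma mul_sinc (x : ℝ) : x * sinc x = sin x := by
  obtain rfl | hx := eq_or_ne x 0
  · simp
  · rw [sinc_of_ne_zero hx, mul_div_cancel₀ _ hx]

lemma sinc_sq_le_two_mul_inv_one_add_sq (x : ℝ) : sinc x ^ 2 ≤ 2 * (1 + x ^ 2)⁻¹ := by
  have hle_one : sinc x ^ 2 ≤ 1 := (sq_le_one_iff_abs_le_one _).2 (abs_sinc_le_one x)
  have hsin : (x * sinc x) ^ 2 ≤ 1 := mul_sinc x ▸ sin_sq_le_one x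
  rw [← div_eq_mul_inv, le_div_iff₀ (by positivity)]
  linarith

lemma memLp_two_sinc : MemLp sinc 2 := by
  rw [memLp_two_iff_integrable_sq continuous_sinc.aestronglyMeasurable]
  refine (integrable_inv_one_add_sq.const_mul 2).mono'
    (continuous_sinc.pow 2).aestronglyMeasurable (.of_forall fun x => ?_)
  rw [norm_of_nonneg (sq_nonneg _)]
  exact sinc_sq_le_two_mul_inv_one_add_sq x

lemma memLp_two_sinc_mul_add {c : ℝ} (hc : c ≠ 0) (a : ℝ) :
    MemLp (fun x => sinc (c * x + a)) 2 := by
  rw [memLp_two_iff_integrable_sq (by fun_prop)]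
  exact (memLp_two_sinc.integrable_sq.comp_add_right a).comp_mul_left' hc

lemma integrable_sinc_mul_sinc {c : ℝ} (hc : c ≠ 0) (a b : ℝ) :
    Integrable fun x => sinc (c * x + a) * sinc (c * x + b) :=
  (memLp_two_sinc_mul_add hc a).integrable_mul (memLp_two_sinc_mul_add hc b)

lemma integral_cexp_mul_I_eq_sinc (r x : ℝ) :
    ∫ t in -r..r, Complex.exp ((x * t : ℝ) * Complex.I) = 2 * r * sinc (r * x) := by
  obtain rfl | hx := eq_or_ne x 0
  · simp [← two_mul]
  · have hx' : (x : ℂ) ≠ 0 := mod_cast hx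
    rw [intervalIntegral.integral_comp_mul_left (fun u : ℝ => Complex.exp (u * Complex.I)) hx,
      mul_neg, integral_exp_mul_I_eq_sinc, mul_comm x r, Complex.real_smul]
    push_cast
    field_simp

lemma fourierCoeffOn_cexp_mul_I {r : ℝ} (hr : -r < r) (x : ℝ) (n : ℤ) :
    fourierCoeffOn hr (fun t => Complex.exp ((x * t : ℝ) * Complex.I)) n =
      sinc (r * x - n * π) := by
  have hr₀ : r ≠ 0 := by
    rintro rfl
    simp at hr
  have hr₀' : (r : ℂ) ≠ 0 := mod_cast hr₀
  have hmul (t : ℝ) : fourier (-n) (t : AddCircle (r - -r)) •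
      Complex.exp ((x * t : ℝ) * Complex.I) =
        Complex.exp (((x - n * π / r) * t : ℝ) * Complex.I) := by
    rw [fourier_coe_apply, smul_eq_mul, ← Complex.exp_add]
    congr 1
    push_cast
    field_simp
    ring
  simp only [fourierCoeffOn_eq_integral, hmul, integral_cexp_mul_I_eq_sinc]
  rw [mul_sub, mul_div_cancel₀ _ hr₀, Complex.real_smul]
  push_cast
  field_simp
  ring

lemma memLp_cexp_mul_I (p : ENNReal) (μ : Measure ℝ) [IsFiniteMeasure μ] (x : ℝ) :
    MemLp (fun t : ℝ => Complex.exp ((x * t : ℝ) * Complex.I)) p μ :=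
  .of_bound (by fun_prop) 1 (.of_forall fun _ => (Complex.norm_exp_ofReal_mul_I _).le)

lemma hasSum_sinc_mul_sinc (x y : ℝ) :
    HasSum (fun n : ℤ => sinc (x + n * π) * sinc (y + n * π)) (sinc (x - y)) := by
  have hlt : (-1 : ℝ) < 1 := by norm_num
  have hinner (t : ℝ) : conj (Complex.exp ((x * t : ℝ) * Complex.I)) *
      Complex.exp ((y * t : ℝ) * Complex.I) = Complex.exp (((y - x) * t : ℝ) * Complex.I) := by
    rw [← Complex.exp_conj, map_mul, Complex.conj_ofReal, Complex.conj_I, ← Complex.exp_add]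
    congr 1
    push_cast
    ring
  have hparseval := hasSum_conj_fourierCoeffOn_mul_fourierCoeffOn hlt
    (memLp_cexp_mul_I 2 _ x) (memLp_cexp_mul_I 2 _ y)
  simp only [hinner, fourierCoeffOn_cexp_mul_I, integral_cexp_mul_I_eq_sinc, Complex.conj_ofReal,
    one_mul] at hparseval
  rw [← (Equiv.neg ℤ).hasSum_iff, ← Complex.hasSum_ofReal, ← sinc_neg, neg_sub]
  convert hparseval using 1
  · ext n
    simp [sub_eq_add_neg]
  · rw [Complex.real_smul]
    push_cast
    ring

lemma integral_sinc_mul_sinc (a b : ℝ) :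
    ∫ x, sinc (π * x + a) * sinc (π * x + b) = sinc (a - b) := by
  have htsum (x : ℝ) :
      ∑' n : ℤ, sinc (π * (x + n) + a) * sinc (π * (x + n) + b) = sinc (a - b) := by
    rw [← add_sub_add_left_eq_sub a b (π * x), ← (hasSum_sinc_mul_sinc _ _).tsum_eq]
    congr! 4 <;> ring
  rw [integral_eq_integral_tsum_comp_add_int (integrable_sinc_mul_sinc pi_ne_zero a b)]
  simp [htsum]

lemma neg_sin_sq_div_eq_sinc_mul_sinc_add {x : ℝ} (hx₀ : x ≠ 0) (hx₁ : x ≠ -1) :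
    -(sin (π * x) ^ 2 / (π ^ 2 * x * (x + 1) ^ 2)) =
      sinc (π * x + π) * sinc (π * x + π) + sinc (π * x) * sinc (π * x + π) := by
  have hadd : x + 1 ≠ 0 := fun h => hx₁ (eq_neg_of_add_eq_zero_left h)
  have hne : π * x + π ≠ 0 := mul_add_one π x ▸ mul_ne_zero pi_ne_zero hadd
  rw [sinc_of_ne_zero (mul_ne_zero pi_ne_zero hx₀), sinc_of_ne_zero hne,
    sin_add_pi, ← mul_add_one]
  field_simp
  ring

end Sinc

theorem stmt_7
    -- `g` is the continuous extension of `x ↦ -sin²(πx)/(π²·x·(x+1)²)`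
    (g : ℝ → ℝ) (hc : Continuous g)
    (hgeq : ∀ x : ℝ, x ≠ 0 → x ≠ -1 →
      g x = -(Real.sin (π * x) ^ 2 / (π ^ 2 * x * (x + 1) ^ 2))) :
    Integrable g ∧ (∫ x : ℝ, g x) = 1 := by
  have hg : g = fun x =>
      sinc (π * x + π) * sinc (π * x + π) + sinc (π * x + 0) * sinc (π * x + π) := by
    refine hc.ext_on ((toFinite {0, -1}).countable.dense_compl ℝ) (by fun_prop) fun x hx => ?_
    obtain ⟨hx₀, hx₁⟩ : x ≠ 0 ∧ x ≠ -1 := by simpa using hx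
    rw [hgeq x hx₀ hx₁, neg_sin_sq_div_eq_sinc_mul_sinc_add hx₀ hx₁, add_zero]
  have hint (a : ℝ) := integrable_sinc_mul_sinc pi_ne_zero a π
  rw [hg, integral_add (hint π) (hint 0), integral_sinc_mul_sinc, integral_sinc_mul_sinc]
  exact ⟨(hint π).add (hint 0), by simp [sinc_of_ne_zero pi_ne_zero]⟩
end

section
/- Define M(z) = −2·∫ sin²(πs)/(π²·s·(s+1)²) ds − 1 along the path (−∞, 0] followed by the segment from 0 to z (the integrand extended entirely), and set ψ(x) := M(x) − sgn(x) for x ∈ ℝ. Then ψ ∈ L¹(ℝ), its Fourier transform ψ̂(t) = ∫_{−∞}^{∞} ψ(x)·e^{−2πixt} dx satisfies ψ̂(0) = 2, and ψ̂(t) = −1/(π·i·t) for every real t with |t| ≥ 1. -/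
open MeasureTheory Real Set

/-!
On the real line the integrand `g` satisfies `x g(x) = sinc²(π(x + 1))`, whose Fourier transform is
`e^{2πit}` times the triangle function. It vanishes for `|t| ≥ 1`, so there `ĝ` is locally constant,
hence zero by Riemann–Lebesgue; integrating `ĝ'` from `-1` to `0` then gives `∫ g = -1`. This value
makes `ψ(x)` equal to `2 ∫_x^∞ g` for `x > 0` and to `-2 ∫_{-∞}^x g` for `x < 0`. By Fubini, half of
`∫ ψ e` is `∫ (∫_0^u e) g(u) du`; for `e = 1` this is `∫ u g(u) du = 1`, and for
`e(x) = e^{-2πixt}` it is `(∫ g - ĝ(t)) / (2πit)`.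
-/

open Filter Bornology
open scoped FourierTransform Convolution

lemma eq_of_hasDerivWithinAt_zero {E : Type*} [NormedAddCommGroup E] [NormedSpace ℝ E]
    {f : ℝ → E} {s : Set ℝ} (hs : Convex ℝ s) (hf : ∀ x ∈ s, HasDerivWithinAt f 0 s x) {x y : ℝ}
    (hx : x ∈ s) (hy : y ∈ s) : f x = f y := by
  simpa [sub_eq_zero, eq_comm] using
    hs.norm_image_sub_le_of_norm_hasDerivWithin_le hf (fun _ _ ↦ norm_zero.le) hx hy

section Fourier

variable {E : Type*} [NormedAddCommGroup E] [NormedSpace ℂ E]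

lemma fourier_zero_eq_integral (f : ℝ → E) : 𝓕 f 0 = ∫ x, f x := by
  simp [Real.fourier_real_eq]

lemma fourier_eq_integral_mul_exp (f : ℝ → ℂ) (t : ℝ) :
    𝓕 f t = ∫ x : ℝ, f x * Complex.exp (-2 * π * Complex.I * x * t) := by
  rw [Real.fourier_real_eq_integral_exp_smul]
  congr with x
  rw [smul_eq_mul, mul_comm]
  push_cast
  ring_nf

lemma fourier_const_smul (c : ℂ) (f : ℝ → E) (t : ℝ) :
    𝓕 (fun x ↦ c • f x) t = c • 𝓕 f t := by
  simp only [Real.fourier_real_eq, smul_comm _ c, integral_smul]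

lemma fourier_comp_add_right (f : ℝ → E) (a t : ℝ) :
    𝓕 (fun x ↦ f (x + a)) t = 𝐞 (a * t) • 𝓕 f t := by
  simpa [mul_comm] using!
    congrFun (VectorFourier.fourierIntegral_comp_add_right 𝐞 volume (innerₗ ℝ) f a) t

lemma hasDerivAt_fourier_smul {f : ℝ → E} (hf : Integrable f)
    (hxf : Integrable fun x ↦ x • f x) (t : ℝ) :
    HasDerivAt (𝓕 f) ((-2 * π * Complex.I : ℂ) • 𝓕 (fun x ↦ x • f x) t) t := by
  refine (Real.hasDerivAt_fourier hf hxf t).congr_deriv ?_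
  rw [← fourier_const_smul]
  simp only [mul_smul, Complex.coe_smul]

lemma fourier_eq_zero_of_fourier_smul_eq_zero {f : ℝ → E} (hf : Integrable f)
    (hxf : Integrable fun x ↦ x • f x) {s : Set ℝ} (hs : Convex ℝ s) (hs' : ¬IsBounded s)
    (hzero : ∀ t ∈ s, 𝓕 (fun x ↦ x • f x) t = 0) {t : ℝ} (ht : t ∈ s) : 𝓕 f t = 0 := by
  have hderiv : ∀ r ∈ s, HasDerivWithinAt (𝓕 f) 0 s r := fun r hr ↦
    ((hasDerivAt_fourier_smul hf hxf r).congr_deriv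
      (by rw [hzero r hr, smul_zero])).hasDerivWithinAt
  have : (cocompact ℝ ⊓ 𝓟 s).NeBot := by
    rwa [← Metric.cobounded_eq_cocompact, neBot_iff, ne_eq, inf_principal_eq_bot, ← isBounded_def]
  refine tendsto_nhds_unique_of_eventuallyEq (l := cocompact ℝ ⊓ 𝓟 s) tendsto_const_nhds
    ((Real.zero_at_infty_fourier f).mono_left inf_le_left) ?_
  filter_upwards [mem_inf_of_right (mem_principal_self s)] with r hr
    using eq_of_hasDerivWithinAt_zero hs hderiv ht hr

end Fourier

section Fejer

lemma fourier_indicator_Icc {r : ℝ} (hr : 0 ≤ r) (t : ℝ) :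
    𝓕 ((Icc (-r) r).indicator (1 : ℝ → ℂ)) t = ((2 * r * sinc (2 * π * r * t) : ℝ) : ℂ) := by
  set a : ℝ := -2 * π * t with ha
  have hF : 𝓕 ((Icc (-r) r).indicator (1 : ℝ → ℂ)) t
      = ∫ x in -r..r, Complex.exp ((x * a : ℝ) * Complex.I) := by
    rw [Real.fourier_real_eq_integral_exp_smul, intervalIntegral.integral_of_le (by linarith),
      ← integral_Icc_eq_integral_Ioc, ← integral_indicator measurableSet_Icc]
    congr with x
    simp only [indicator_apply, Pi.one_apply, smul_eq_mul, mul_ite, mul_one, mul_zero, ha]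
    ring_nf
  rcases eq_or_ne t 0 with rfl | ht
  · simp [hF, ha, two_mul]
  · have hsubst := intervalIntegral.smul_integral_comp_mul_right (a := -r) (b := r)
      (fun x : ℝ ↦ Complex.exp (x * Complex.I)) a
    rw [neg_mul, integral_exp_mul_I_eq_sinc, ← hF, Complex.real_smul] at hsubst
    have ha0 : (a : ℂ) ≠ 0 := by simp [ha, ht, pi_ne_zero]
    rw [show 2 * π * r * t = -(r * a) by rw [ha]; ring, sinc_neg]
    apply mul_left_cancel₀ ha0
    rw [hsubst]
    push_cast
    ring

lemma convolution_indicator_Icc (r t : ℝ) :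
    ((Icc (-r) r).indicator (1 : ℝ → ℂ) ⋆[ContinuousLinearMap.mul ℂ ℂ]
      (Icc (-r) r).indicator (1 : ℝ → ℂ)) t = ((max 0 (2 * r - |t|) : ℝ) : ℂ) := by
  have hinter : ∀ s, (Icc (-r) r).indicator (1 : ℝ → ℂ) s *
      (Icc (-r) r).indicator (1 : ℝ → ℂ) (t - s) =
        (Icc (max (-r) (t - r)) (min r (t + r))).indicator 1 s := by
    intro s
    have hmem : t - s ∈ Icc (-r) r ↔ s ∈ Icc (t - r) (t + r) := by
      rw [mem_Icc, mem_Icc]; constructor <;> rintro ⟨h₁, h₂⟩ <;> constructor <;> linarith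
    rw [← Icc_inter_Icc, inter_indicator_one, Pi.mul_apply]
    simp only [indicator_apply, Pi.one_apply, hmem]
  have hlength : min r (t + r) - max (-r) (t - r) = 2 * r - |t| := by
    rcases le_total 0 t with ht | ht
    · rw [min_eq_left (by linarith), max_eq_right (by linarith), abs_of_nonneg ht]; ring
    · rw [min_eq_right (by linarith), max_eq_left (by linarith), abs_of_nonpos ht]; ring
  simp only [convolution_def, ContinuousLinearMap.mul_apply', hinter]
  rw [integral_indicator measurableSet_Icc]
  simp [Measure.real, hlength, ENNReal.toReal_ofReal', max_comm (0 : ℝ)]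

/-- The triangle function on `[-1, 1]`, taken complex-valued so that `𝓕` applies to it; it is the
Fourier transform of the Fejér kernel `sinc²(πx)`. -/
noncomputable def tent (t : ℝ) : ℂ := ((max 0 (1 - |t|) : ℝ) : ℂ)

lemma continuous_tent : Continuous tent := by unfold tent; fun_prop

lemma tent_neg (t : ℝ) : tent (-t) = tent t := by simp [tent]

lemma tent_of_one_le_abs {t : ℝ} (ht : 1 ≤ |t|) : tent t = 0 := by
  simp [tent, ht]

lemma tent_of_mem_Icc {t : ℝ} (ht : t ∈ Icc (-1) 0) : tent t = 1 + t := by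
  rw [tent, abs_of_nonpos ht.2, max_eq_right (by linarith [ht.1])]
  simp

lemma integrable_tent : Integrable tent := by
  refine continuous_tent.integrable_of_hasCompactSupport
    (.intro (isCompact_Icc (a := (-1 : ℝ)) (b := 1)) fun t ht ↦ tent_of_one_le_abs ?_)
  contrapose! ht
  exact abs_le.1 ht.le

lemma fourier_tent (t : ℝ) : 𝓕 tent t = ((sinc (π * t) ^ 2 : ℝ) : ℂ) := by
  set box : ℝ → ℂ := (Icc (-(1 / 2)) (1 / 2)).indicator 1 with hbox
  have hbox_int : Integrable box :=
    (integrable_indicator_iff measurableSet_Icc).2 (integrableOn_const measure_Icc_lt_top.ne)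
  have htent : tent = box ⋆[ContinuousLinearMap.mul ℂ ℂ] box := by
    ext s
    rw [hbox, convolution_indicator_Icc, mul_one_div_cancel two_ne_zero, tent]
  rw [htent, Real.fourier_mul_convolution_eq hbox_int hbox_int,
    fourier_indicator_Icc (by norm_num)]
  push_cast
  ring_nf

lemma integrable_sinc_sq : Integrable fun x ↦ sinc x ^ 2 := by
  have hsinc : ∀ x, sinc x * x = sin x := fun x ↦ by
    by_cases hx : x = 0
    · simp [hx]
    · rw [sinc_of_ne_zero hx, div_mul_cancel₀ _ hx]
  refine (integrable_inv_one_add_sq.const_mul 2).mono'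
    (continuous_sinc.pow 2).aestronglyMeasurable (.of_forall fun x ↦ ?_)
  rw [Real.norm_of_nonneg (sq_nonneg _), ← div_eq_mul_inv, le_div_iff₀ (by positivity)]
  calc sinc x ^ 2 * (1 + x ^ 2) = sinc x ^ 2 + sin x ^ 2 := by rw [← hsinc x]; ring
    _ ≤ 1 + 1 := add_le_add ((sq_le_one_iff_abs_le_one _).2 (abs_sinc_le_one x))
        (sin_sq_le_one x)
    _ = 2 := one_add_one_eq_two

lemma fourier_sinc_sq (t : ℝ) : 𝓕 (fun x : ℝ ↦ ((sinc (π * x) ^ 2 : ℝ) : ℂ)) t = tent t := by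
  have hF : 𝓕 tent = fun x : ℝ ↦ ((sinc (π * x) ^ 2 : ℝ) : ℂ) := funext fourier_tent
  have hint : Integrable (𝓕 tent) := by
    rw [hF]
    exact (integrable_sinc_sq.comp_mul_left' pi_ne_zero).ofReal
  rw [← hF, ← neg_neg t, ← Real.fourierInv_eq_fourier_neg,
    continuous_tent.fourierInv_fourier_eq integrable_tent hint, tent_neg, neg_neg]

end Fejer

section SignedTail

lemma integral_fourierChar {t : ℝ} (ht : t ≠ 0) (u : ℝ) :
    ∫ x in (0 : ℝ)..u, (𝐞 (-(x * t)) : ℂ) =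
      (2 * π * Complex.I * t : ℂ)⁻¹ * (1 - 𝐞 (-(u * t))) := by
  set c : ℂ := -(2 * π * Complex.I * t) with hc
  have hc0 : c ≠ 0 := by simp [hc, ht, pi_ne_zero]
  have hchar : ∀ x : ℝ, (𝐞 (-(x * t)) : ℂ) = Complex.exp (c * x) := by
    intro x
    rw [Real.fourierChar_apply, hc]
    push_cast
    ring_nf
  simp only [hchar]
  rw [integral_exp_mul_complex hc0, ← neg_neg (2 * π * Complex.I * t), ← hc]
  simp [div_eq_inv_mul, inv_neg, ← mul_neg]

/-- The indicator of the oriented interval from `0` to `u`: integrating `f` against it in `x` gives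
the interval integral `∫ x in 0..u, f x`. -/
noncomputable def signedIndicator (u x : ℝ) : ℝ :=
  (Ioc 0 u).indicator 1 x - (Ioc u 0).indicator 1 x

lemma norm_signedIndicator (u x : ℝ) : ‖signedIndicator u x‖ = (uIoc 0 u).indicator 1 x := by
  rcases le_total 0 u with hu | hu
  · simp [signedIndicator, hu, indicator_apply, apply_ite]
  · simp [signedIndicator, hu, indicator_apply, apply_ite]

lemma measurable_signedIndicator : Measurable (Function.uncurry signedIndicator) := by
  have hpos : MeasurableSet {p : ℝ × ℝ | p.2 ∈ Ioc 0 p.1} :=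
    (measurableSet_lt measurable_const measurable_snd).inter
      (measurableSet_le measurable_snd measurable_fst)
  have hneg : MeasurableSet {p : ℝ × ℝ | p.2 ∈ Ioc p.1 0} :=
    (measurableSet_lt measurable_fst measurable_snd).inter
      (measurableSet_le measurable_snd measurable_const)
  exact (measurable_one.indicator hpos).sub (measurable_one.indicator hneg)

lemma integrable_signedIndicator (u : ℝ) : Integrable (signedIndicator u) := by
  have h : ∀ a b : ℝ, Integrable ((Ioc a b).indicator (1 : ℝ → ℝ)) := fun a b ↦
    (integrable_indicator_iff measurableSet_Ioc).2 (integrableOn_const measure_Ioc_lt_top.ne)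
  exact (h 0 u).sub (h u 0)

lemma integral_norm_signedIndicator (u : ℝ) : ∫ x, ‖signedIndicator u x‖ = |u| := by
  simp only [norm_signedIndicator]
  rw [integral_indicator_one measurableSet_uIoc]
  simp [uIoc, Measure.real, max_sub_min_eq_abs]

variable {E : Type*} [NormedAddCommGroup E]

section RealScalars

variable [NormedSpace ℝ E]

lemma signedIndicator_smul_of_pos {x : ℝ} (hx : 0 < x) (u : ℝ) (v : E) :
    signedIndicator u x • v = (Ici x).indicator (fun _ ↦ v) u := by
  simp [signedIndicator, indicator_apply, hx, hx.not_ge]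

lemma signedIndicator_smul_of_nonpos {x : ℝ} (hx : x ≤ 0) (u : ℝ) (v : E) :
    signedIndicator u x • v = -(Iio x).indicator (fun _ ↦ v) u := by
  simp [signedIndicator, indicator_apply, hx, hx.not_gt]

lemma integral_signedIndicator_smul (u : ℝ) (f : ℝ → E) :
    ∫ x, signedIndicator u x • f x = ∫ x in (0 : ℝ)..u, f x := by
  rcases le_total 0 u with hu | hu
  · rw [intervalIntegral.integral_of_le hu, ← integral_indicator measurableSet_Ioc]
    simp [signedIndicator, hu, indicator_apply]
  · rw [intervalIntegral.integral_of_ge hu, ← integral_indicator measurableSet_Ioc, ← integral_neg]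
    simp [signedIndicator, hu, indicator_apply]

/-- The primitive of `-g` on each half-line that vanishes at infinity: `∫_x^∞ g` for `x > 0` and
`-∫_{-∞}^x g` for `x ≤ 0`. It jumps by `∫ g` at the origin. -/
noncomputable def signedTail (g : ℝ → E) (x : ℝ) : E :=
  if 0 < x then ∫ u in Ioi x, g u else -∫ u in Iic x, g u

lemma signedTail_eq_integral (g : ℝ → E) (x : ℝ) :
    signedTail g x = ∫ u, signedIndicator u x • g u := by
  rw [signedTail]
  split_ifs with hx
  · rw [← integral_Ici_eq_integral_Ioi, ← integral_indicator measurableSet_Ici]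
    simp only [signedIndicator_smul_of_pos hx]
    rfl
  · rw [integral_Iic_eq_integral_Iio, ← integral_indicator measurableSet_Iio, ← integral_neg]
    simp only [signedIndicator_smul_of_nonpos (not_lt.1 hx)]
    rfl

lemma integrable_signedIndicator_smul {g : ℝ → E} (hg : AEStronglyMeasurable g)
    (hxg : Integrable fun x ↦ x • g x) :
    Integrable (fun p : ℝ × ℝ ↦ signedIndicator p.2 p.1 • g p.2) (volume.prod volume) := by
  have hmeas : AEStronglyMeasurable (fun p : ℝ × ℝ ↦ signedIndicator p.2 p.1 • g p.2)
      (volume.prod volume) :=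
    (measurable_signedIndicator.comp measurable_swap).aestronglyMeasurable.smul hg.comp_snd
  refine (integrable_prod_iff' hmeas).2 ⟨.of_forall fun u ↦ ?_, ?_⟩
  · exact (integrable_signedIndicator u).smul_const (g u)
  · refine hxg.norm.congr (.of_forall fun u ↦ ?_)
    simp only [norm_smul, integral_mul_const, integral_norm_signedIndicator, norm_eq_abs u]

lemma integrable_signedTail {g : ℝ → E} (hg : AEStronglyMeasurable g)
    (hxg : Integrable fun x ↦ x • g x) : Integrable (signedTail g) := by
  simpa only [← signedTail_eq_integral] using
    (integrable_signedIndicator_smul hg hxg).integral_prod_left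

end RealScalars

variable [NormedSpace ℂ E]

lemma integral_smul_signedTail [CompleteSpace E] {g : ℝ → E} (hg : AEStronglyMeasurable g)
    (hxg : Integrable fun x ↦ x • g x) {e : ℝ → ℂ} (he : AEStronglyMeasurable e) {C : ℝ}
    (hC : ∀ x, ‖e x‖ ≤ C) :
    ∫ x, e x • signedTail g x = ∫ u, (∫ x in (0 : ℝ)..u, e x) • g u := by
  have hint : Integrable (fun p : ℝ × ℝ ↦ e p.1 • signedIndicator p.2 p.1 • g p.2)
      (volume.prod volume) :=
    (integrable_signedIndicator_smul hg hxg).bdd_smul C he.comp_fst (.of_forall fun p ↦ hC p.1)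
  calc ∫ x, e x • signedTail g x
      = ∫ x, ∫ u, e x • signedIndicator u x • g u := by
        simp only [signedTail_eq_integral, integral_smul]
    _ = ∫ u, ∫ x, e x • signedIndicator u x • g u := integral_integral_swap hint
    _ = ∫ u, (∫ x, signedIndicator u x • e x) • g u := by
        simp only [← integral_smul_const, smul_comm (e _), smul_assoc]
    _ = ∫ u, (∫ x in (0 : ℝ)..u, e x) • g u := by
        simp only [integral_signedIndicator_smul]

lemma integral_signedTail [CompleteSpace E] {g : ℝ → E} (hg : AEStronglyMeasurable g)
    (hxg : Integrable fun x ↦ x • g x) : ∫ x, signedTail g x = ∫ x, x • g x := by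
  simpa using integral_smul_signedTail hg hxg (aestronglyMeasurable_const (b := 1)) (C := 1)
    (by simp)

lemma fourier_signedTail [CompleteSpace E] {g : ℝ → E} (hg : Integrable g)
    (hxg : Integrable fun x ↦ x • g x) {t : ℝ} (ht : t ≠ 0) :
    𝓕 (signedTail g) t = (2 * π * Complex.I * t : ℂ)⁻¹ • ((∫ x, g x) - 𝓕 g t) := by
  have hchar_int : Integrable fun u ↦ (𝐞 (-(u * t)) : ℂ) • g u :=
    hg.bdd_smul 1 (by fun_prop) (.of_forall fun u ↦ (Circle.norm_coe _).le)
  calc 𝓕 (signedTail g) t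
      = ∫ x, (𝐞 (-(x * t)) : ℂ) • signedTail g x := Real.fourier_real_eq _ _
    _ = ∫ u, (∫ x in (0 : ℝ)..u, (𝐞 (-(x * t)) : ℂ)) • g u :=
        integral_smul_signedTail hg.aestronglyMeasurable hxg (by fun_prop)
          (fun x ↦ (Circle.norm_coe _).le)
    _ = ∫ u, (2 * π * Complex.I * t : ℂ)⁻¹ • (g u - (𝐞 (-(u * t)) : ℂ) • g u) := by
        simp only [integral_fourierChar ht, mul_smul, sub_smul, one_smul]
    _ = (2 * π * Complex.I * t : ℂ)⁻¹ • ((∫ x, g x) - 𝓕 g t) := by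
        rw [integral_smul, integral_sub hg hchar_int, Real.fourier_real_eq]
        rfl

lemma neg_two_mul_integral_Iic_sub_one_sub_sign {g : ℝ → ℂ} (hg : Integrable g)
    (hone : ∫ x, g x = -1) {x : ℝ} (hx : x ≠ 0) :
    -2 * (∫ u in Iic x, g u) - 1 - Real.sign x = 2 * signedTail g x := by
  rcases hx.lt_or_gt with hx | hx
  · rw [signedTail, if_neg hx.not_gt, Real.sign_of_neg hx]
    push_cast
    ring
  · have hsplit := integral_add_compl (measurableSet_Iic (a := x)) hg
    rw [compl_Iic, hone] at hsplit
    rw [signedTail, if_pos hx, Real.sign_of_pos hx]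
    push_cast
    linear_combination -2 * hsplit

end SignedTail

lemma integrable_of_locallyIntegrable_of_integrable_smul {E : Type*} [NormedAddCommGroup E]
    [NormedSpace ℝ E] {f : ℝ → E} (hf : LocallyIntegrable f)
    (hxf : Integrable fun x ↦ x • f x) : Integrable f := by
  have hin : IntegrableOn f (Icc (-1) 1) := hf.integrableOn_isCompact isCompact_Icc
  have hout : IntegrableOn f (Icc (-1) 1)ᶜ := by
    refine Integrable.mono hxf.integrableOn hf.aestronglyMeasurable.restrict
      ((ae_restrict_iff' measurableSet_Icc.compl).2 (.of_forall fun x hx ↦ ?_))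
    have hx1 : 1 ≤ ‖x‖ := by
      contrapose! hx
      exact not_not.2 (abs_le.1 hx.le)
    rw [norm_smul]
    exact le_mul_of_one_le_left (norm_nonneg _) hx1
  rw [← integrableOn_univ, ← union_compl_self (Icc (-1 : ℝ) 1)]
  exact hin.union hout

lemma integral_Iic_add_segment {g : ℂ → ℂ} (hg : Integrable fun u : ℝ ↦ g u) (x : ℝ) :
    (∫ u in Iic (0 : ℝ), g u) + ∫ t in (0 : ℝ)..1, x * g (t * x) = ∫ u in Iic x, g u := by
  have hsubst := intervalIntegral.smul_integral_comp_mul_right (a := 0) (b := 1)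
    (fun u : ℝ ↦ g u) x
  simp only [zero_mul, one_mul, Complex.real_smul, Complex.ofReal_mul] at hsubst
  rw [intervalIntegral.integral_const_mul, hsubst,
    ← intervalIntegral.integral_Iic_sub_Iic hg.integrableOn hg.integrableOn, add_sub_cancel]

/-- The function `g` is the Fejér kernel `sinc²(π(x + 1))` divided by `x`, that is,
`sin²(πx) / (π² x (x + 1)²)`. The relation is multiplied out and only required almost everywhere,
so that the values of `g` at `0` and `-1` are irrelevant. -/
def IsFejerQuotient (g : ℝ → ℂ) : Prop :=
  (fun x ↦ x • g x) =ᵐ[volume] fun x ↦ ((sinc (π * (x + 1)) ^ 2 : ℝ) : ℂ)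

lemma isFejerQuotient_of_eq_div {g : ℂ → ℂ} (hg : ∀ s : ℂ, s ≠ 0 → s ≠ -1 →
      g s = Complex.sin ((π : ℂ) * s) ^ 2 / ((π : ℂ) ^ 2 * s * (s + 1) ^ 2)) :
    IsFejerQuotient fun x ↦ g x := by
  filter_upwards [Measure.ae_ne volume 0, Measure.ae_ne volume (-1)] with x hx0 hx1
  have hx0' : (x : ℂ) ≠ 0 := mod_cast hx0
  have hx1' : x + 1 ≠ 0 := fun h ↦ hx1 (eq_neg_of_add_eq_zero_left h)
  rw [hg x hx0' (mod_cast hx1), sinc_of_ne_zero (mul_ne_zero pi_ne_zero hx1'), mul_add_one,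
    sin_add_pi, Complex.real_smul]
  push_cast
  field_simp

namespace IsFejerQuotient

variable {g : ℝ → ℂ}

lemma fourier_smul (hquot : IsFejerQuotient g) (t : ℝ) :
    𝓕 (fun x ↦ x • g x) t = 𝐞 t * tent t := by
  rw [Real.fourier_congr_ae hquot, fourier_comp_add_right (fun x ↦ ((sinc (π * x) ^ 2 : ℝ) : ℂ)),
    fourier_sinc_sq, one_mul]
  rfl

lemma integrable_smul (hquot : IsFejerQuotient g) : Integrable fun x ↦ x • g x :=
  (integrable_congr hquot).2
    ((integrable_sinc_sq.comp_mul_left' pi_ne_zero).comp_add_right 1).ofReal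

lemma fourier_eq_zero_of_one_le_abs (hquot : IsFejerQuotient g) (hg : Integrable g)
    {t : ℝ} (ht : 1 ≤ |t|) : 𝓕 g t = 0 := by
  have hxg := hquot.integrable_smul
  have hzero : ∀ r : ℝ, 1 ≤ |r| → 𝓕 (fun x ↦ x • g x) r = 0 := fun r hr ↦ by
    rw [hquot.fourier_smul, tent_of_one_le_abs hr, mul_zero]
  rcases le_abs'.1 ht with ht | ht
  · refine fourier_eq_zero_of_fourier_smul_eq_zero hg hxg (convex_Iic (-1))
      ?_ (fun r hr ↦ hzero r (le_abs'.2 (.inl hr))) ht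
    exact fun h ↦ not_bddBelow_Iic _ h.bddBelow
  · refine fourier_eq_zero_of_fourier_smul_eq_zero hg hxg (convex_Ici 1)
      ?_ (fun r hr ↦ hzero r (le_abs'.2 (.inr hr))) ht
    exact fun h ↦ not_bddAbove_Ici _ h.bddAbove

lemma integral_eq_neg_one (hquot : IsFejerQuotient g) (hg : Integrable g) :
    ∫ x, g x = -1 := by
  have hderiv : ∀ t ∈ Icc (-1 : ℝ) 0, HasDerivAt (𝓕 g)
      (-2 * π * Complex.I * (𝐞 t * (1 + t))) t := fun t ht ↦ by
    have := hasDerivAt_fourier_smul hg (hquot.integrable_smul) t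
    rwa [hquot.fourier_smul, tent_of_mem_Icc ht] at this
  have hprim : ∀ t : ℝ, HasDerivAt (fun r : ℝ ↦ 𝐞 r * ((2 * π * Complex.I)⁻¹ - (1 + r)))
      (-2 * π * Complex.I * (𝐞 t * (1 + t))) t := fun t ↦ by
    refine ((hasDerivAt_fourierChar t).mul
      (((hasDerivAt_id t).ofReal_comp.const_add 1).const_sub (2 * π * Complex.I)⁻¹)).congr_deriv ?_
    have := Complex.two_pi_I_ne_zero
    simp only [id, Complex.ofReal_one]
    field_simp
    ring
  have hconst := eq_of_hasDerivWithinAt_zero (convex_Icc (-1 : ℝ) 0)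
    (fun t ht ↦ (((hderiv t ht).sub (hprim t)).congr_deriv (sub_self _)).hasDerivWithinAt)
    (left_mem_Icc.2 (by norm_num)) (right_mem_Icc.2 (by norm_num))
  have hchar : (𝐞 (-1 : ℝ) : ℂ) = 1 := by simp [Real.fourierChar_apply, Complex.exp_neg]
  have hF : 𝓕 g (-1) = 0 := hquot.fourier_eq_zero_of_one_le_abs hg (by simp)
  rw [← fourier_zero_eq_integral]
  simp only [Pi.sub_apply, hF, hchar, AddChar.map_zero_eq_one, Circle.coe_one, Complex.ofReal_neg,
    Complex.ofReal_one, Complex.ofReal_zero] at hconst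
  linear_combination -hconst

end IsFejerQuotient

theorem stmt_11
    -- `g` is the entire extension of `s ↦ sin²(πs)/(π²·s·(s+1)²)`
    (g : ℂ → ℂ) (hg : Differentiable ℂ g)
    (hgeq : ∀ s : ℂ, s ≠ 0 → s ≠ -1 →
      g s = Complex.sin ((π : ℂ) * s) ^ 2 / ((π : ℂ) ^ 2 * s * (s + 1) ^ 2))
    -- `M z = -2·(∫_{-∞}^0 g + ∫_{[0,z]} g) - 1`, the segment integral parametrized
    (M : ℂ → ℂ)
    (hM : ∀ z : ℂ, M z =
      -2 * ((∫ u in Iic (0 : ℝ), g (u : ℂ)) + ∫ t in (0:ℝ)..1, z * g ((t : ℂ) * z)) - 1)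
    -- `ψ(x) = M(x) - sgn(x)` for real `x`
    (ψ : ℝ → ℂ)
    (hψ : ∀ x : ℝ, ψ x = M x - (Real.sign x : ℂ)) :
    Integrable ψ ∧
      (∫ x : ℝ, ψ x * Complex.exp (-2 * (π : ℂ) * Complex.I * x * 0)) = 2 ∧
      (∀ t : ℝ, 1 ≤ |t| →
        (∫ x : ℝ, ψ x * Complex.exp (-2 * (π : ℂ) * Complex.I * x * t))
          = -1 / ((π : ℂ) * Complex.I * t)) := by
  have hquot := isFejerQuotient_of_eq_div hgeq
  have hxg := hquot.integrable_smul
  have hg_int : Integrable fun x : ℝ ↦ g x := integrable_of_locallyIntegrable_of_integrable_smul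
    (hg.continuous.comp Complex.continuous_ofReal).locallyIntegrable hxg
  have hone := hquot.integral_eq_neg_one hg_int
  have hψ_tail : ψ =ᵐ[volume] fun x ↦ (2 : ℂ) • signedTail (fun u : ℝ ↦ g u) x := by
    filter_upwards [Measure.ae_ne volume 0] with x hx
    rw [hψ, hM, integral_Iic_add_segment hg_int,
      neg_two_mul_integral_Iic_sub_one_sub_sign hg_int hone hx, smul_eq_mul]
  refine ⟨(integrable_congr hψ_tail).2
    ((integrable_signedTail hg_int.aestronglyMeasurable hxg).const_mul 2), ?_, fun t ht ↦ ?_⟩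
  · simp only [mul_zero, Complex.exp_zero, mul_one]
    rw [integral_congr_ae hψ_tail, integral_smul,
      integral_signedTail hg_int.aestronglyMeasurable hxg, ← fourier_zero_eq_integral,
      hquot.fourier_smul]
    simp [tent]
  · have ht0 : t ≠ 0 := abs_pos.1 (one_pos.trans_le ht)
    rw [← fourier_eq_integral_mul_exp, Real.fourier_congr_ae hψ_tail, fourier_const_smul,
      fourier_signedTail hg_int hxg ht0, hone, hquot.fourier_eq_zero_of_one_le_abs hg_int ht]
    simp only [smul_eq_mul]
    field_simp
    ring
end
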